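/- Let λ > 0, let a, b > 0 (playing the roles of ‖μ−ν‖₂ and ‖η‖₂ respectively) with b/a > 1, and let t satisfy 0 < t < λ^{−1}(b/a − 1). Then t·a + λ^{−1} e^{−tλ} b < b/λ; i.e. the diffused worst-case error bound t‖μ−ν‖₂ + λ^{−1}e^{−tλ}‖η‖₂ strictly improves on the undiffused bound ‖η‖₂/λ. -/

import Mathlib

/-- Let `lam > 0`, let `a, b > 0` (playing the roles of `‖μ-ν‖₂` and
`‖η‖₂`) with `b/a > 1`, and let `0 < t < lam⁻¹ (b/a - 1)`. Then
`t·a + lam⁻¹ e^{-t·lam} b < b/lam`: the diffused worst-case error bound strictly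
improves on the undiffused bound. -/
theorem diffusion_improves_worst_case_bound
    (lam a b t : ℝ) (hlam : 0 < lam) (ha : 0 < a) (hb : 0 < b)
    (hba : 1 < b / a) (ht0 : 0 < t) (ht1 : t < lam⁻¹ * (b / a - 1)) :
    t * a + lam⁻¹ * Real.exp (-(t * lam)) * b < b / lam := by
  have hs : 0 < t * lam := mul_pos ht0 hlam
  have h1 : (1 + t * lam) * a < b := by
    have h := mul_lt_mul_of_pos_left ht1 hlam
    rw [← mul_assoc, mul_inv_cancel₀ hlam.ne', one_mul] at h
    rw [← lt_div_iff₀ ha]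
    linarith
  have hE : Real.exp (-(t * lam)) < 1 := by
    rw [← Real.exp_zero]
    exact Real.exp_lt_exp.mpr (by linarith)
  have h2 : (1 + t * lam) * Real.exp (-(t * lam)) ≤ 1 := by
    have h3 := Real.add_one_le_exp (t * lam)
    have h4 : Real.exp (t * lam) * Real.exp (-(t * lam)) = 1 := by
      rw [← Real.exp_add]; simp
    rw [← h4]
    exact mul_le_mul_of_nonneg_right (by linarith) (Real.exp_pos _).le
  rw [lt_div_iff₀ hlam]
  have h5 : (t * a + lam⁻¹ * Real.exp (-(t * lam)) * b) * lam
      = t * lam * a + Real.exp (-(t * lam)) * b := by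
    field_simp
  rw [h5]
  have h6 := mul_lt_mul_of_pos_right h1 (sub_pos.mpr hE)
  have h7 := mul_le_mul_of_nonneg_right h2 ha.le
  linarith
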